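/- Enhancement of diffusivity: the symmetric part of the homogenized matrix. Let κ > 0, let s : ℝ × ℝ^d → ℝ^{d×d} be a smooth ℤ×ℤ^d-periodic antisymmetric matrix field, set 𝐚 := κ I_d + s, and for each i let χ_i : ℝ × ℝ^d → ℝ be a smooth ℤ×ℤ^d-periodic solution of the cell problem ∂_t χ_i − div( 𝐚 (e_i + ∇χ_i) ) = 0 with zero space-time mean over [0,1]×[0,1]^d. Define the homogenized matrix 𝐚̄ by 𝐚̄ e_i := ∫_0^1 ∫_{[0,1]^d} 𝐚 (e_i + ∇χ_i) dx dt. Then for all i, j: (1/2)( (𝐚̄)_{ij} + (𝐚̄)_{ji} ) = κ δ_{ij} + κ ∫_0^1 ∫_{[0,1]^d} ∇χ_i · ∇χ_j dx dt. In particular the symmetric part of 𝐚̄ is, as a quadratic form, at least κ I_d: e·𝐚̄e ≥ κ|e|² for every e ∈ ℝ^d. -/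

import Mathlib

open MeasureTheory Real Topology Filter

noncomputable section

/-- Spatial partial derivative `∂_i f` (via the Fréchet derivative). -/
def pd {d : ℕ} (f : (Fin d → ℝ) → ℝ) (i : Fin d) (x : Fin d → ℝ) : ℝ :=
  fderiv ℝ f x (Pi.single i 1)

/-- The unit box `[0,1]^d`, a fundamental domain for the torus `T^d = ℝ^d/ℤ^d`. -/
def box (d : ℕ) : Set (Fin d → ℝ) := Set.Icc 0 1

/-- `ℤ^d`-periodicity in the space variable (functions on the torus `T^d`). -/
def SpacePeriodic {d : ℕ} (f : (Fin d → ℝ) → ℝ) : Prop :=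
  ∀ (x : Fin d → ℝ) (k : Fin d → ℤ), f (x + fun i => (k i : ℝ)) = f x

/-- Squared length of the spatial gradient, `|∇f|²(x)`. -/
def gradSq {d : ℕ} (f : (Fin d → ℝ) → ℝ) (x : Fin d → ℝ) : ℝ :=
  ∑ i, (pd f i x) ^ 2

/-- Squared `L²(T^d)` norm. -/
def l2sq {d : ℕ} (f : (Fin d → ℝ) → ℝ) : ℝ := ∫ x in box d, (f x) ^ 2

/-- The dissipation `∫_0^t ‖∇θ(s,·)‖²_{L²(T^d)} ds`. -/
def dissipUpTo {d : ℕ} (θ : ℝ → (Fin d → ℝ) → ℝ) (t : ℝ) : ℝ :=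
  ∫ s in Set.Icc (0:ℝ) t, ∫ x in box d, gradSq (θ s) x

/-- The dissipation `∫_0^1 ∫_{T^d} |∇θ|² dx dt`. -/
def dissip {d : ℕ} (θ : ℝ → (Fin d → ℝ) → ℝ) : ℝ := dissipUpTo θ 1

/-- Kronecker delta. -/
def kr {d : ℕ} (i j : Fin d) : ℝ := if i = j then 1 else 0

/-- 1-periodicity in the time variable. -/
def TimePeriodic {d : ℕ} (f : ℝ → (Fin d → ℝ) → ℝ) : Prop :=
  ∀ t x, f (t + 1) x = f t x

/-!
Write `⟨·⟩` for the space-time mean and `p_i = e_i + ∇χ_i`. Testing the cell problem for `χ_i` with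
`χ_j` gives `⟨∇χ_j · 𝐚 p_i⟩ = -⟨χ_j ∂_t χ_i⟩`; after symmetrizing in `i, j` the right-hand side is
the mean of the time derivative `-∂_t (χ_i χ_j)` of a periodic function, hence zero. So `e_j` may
be replaced by `p_j` in `e_j · 𝐚̄ e_i + e_i · 𝐚̄ e_j`, which becomes `⟨p_j · 𝐚 p_i + p_i · 𝐚 p_j⟩`.
There the antisymmetric part of `𝐚` cancels, leaving `2κ ⟨p_i · p_j⟩`, and the cross terms of the
latter vanish because gradients of periodic functions have mean zero. The bound on the quadratic
form holds because `⟨∇χ_i · ∇χ_j⟩` is a Gram matrix.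
-/

open Function Matrix

variable {d : ℕ}

/-- The spatial gradient `∇f`. -/
def grad (f : (Fin d → ℝ) → ℝ) (x : Fin d → ℝ) : Fin d → ℝ := fun k => pd f k x

/-- The divergence of a vector field on `ℝ^d`. -/
def divergence (G : (Fin d → ℝ) → Fin d → ℝ) (x : Fin d → ℝ) : ℝ :=
  ∑ k, pd (fun y => G y k) k x

/-- The mean `⟨f⟩` over the space-time cell `[0,1] × [0,1]^d`, as an iterated integral; the cell has
volume one, so no normalization is needed. -/
def spaceTimeMean (f : ℝ → (Fin d → ℝ) → ℝ) : ℝ :=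
  ∫ t in Set.Icc (0 : ℝ) 1, ∫ x in box d, f t x

/-- The flux `𝐚 (ξ + ∇χ)` of the corrected affine function `ξ · x + χ`. -/
def flux (a : ℝ → (Fin d → ℝ) → Matrix (Fin d) (Fin d) ℝ) (ξ : Fin d → ℝ)
    (χ : ℝ → (Fin d → ℝ) → ℝ) (t : ℝ) (x : Fin d → ℝ) : Fin d → ℝ :=
  a t x *ᵥ (ξ + grad (χ t) x)

/-- `χ` is a space-time periodic `C²` solution of the cell problem `∂_t χ = div (𝐚 (ξ + ∇χ))` with
slope `ξ`. It is determined up to a constant only, as no mean is prescribed. -/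
structure IsCorrector (a : ℝ → (Fin d → ℝ) → Matrix (Fin d) (Fin d) ℝ) (ξ : Fin d → ℝ)
    (χ : ℝ → (Fin d → ℝ) → ℝ) : Prop where
  contDiff : ContDiff ℝ 2 (uncurry χ)
  timePeriodic : TimePeriodic χ
  spacePeriodic : ∀ t, SpacePeriodic (χ t)
  deriv_eq : ∀ t x, deriv (fun τ => χ τ x) t = divergence (flux a ξ χ t) x

section Periodic

lemma SpacePeriodic.mul {f g : (Fin d → ℝ) → ℝ} (hf : SpacePeriodic f) (hg : SpacePeriodic g) :
    SpacePeriodic fun x => f x * g x :=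
  fun x k => congrArg₂ (· * ·) (hf x k) (hg x k)

lemma TimePeriodic.mul {f g : ℝ → (Fin d → ℝ) → ℝ} (hf : TimePeriodic f) (hg : TimePeriodic g) :
    TimePeriodic fun t x => f t x * g t x :=
  fun t x => congrArg₂ (· * ·) (hf t x) (hg t x)

lemma SpacePeriodic.grad_add {f : (Fin d → ℝ) → ℝ} (hf : SpacePeriodic f) (x : Fin d → ℝ)
    (m : Fin d → ℤ) : grad f (x + fun i => (m i : ℝ)) = grad f x := by
  funext k
  simp only [grad, pd]
  rw [← fderiv_comp_add_right, funext fun y => hf y m]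

lemma spacePeriodic_flux {a : ℝ → (Fin d → ℝ) → Matrix (Fin d) (Fin d) ℝ} {ξ : Fin d → ℝ}
    {χ : ℝ → (Fin d → ℝ) → ℝ} {t : ℝ} (ha : ∀ k l, SpacePeriodic fun x => a t x k l)
    (hχ : SpacePeriodic (χ t)) (k : Fin d) : SpacePeriodic fun x => flux a ξ χ t x k := by
  intro x m
  have ha_eq : a t (x + fun i => (m i : ℝ)) = a t x := by
    ext k l
    exact ha k l x m
  simp only [flux, ha_eq, hχ.grad_add]

end Periodic

section Regularity

variable {n : WithTop ℕ∞} {f : ℝ → (Fin d → ℝ) → ℝ}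

lemma contDiff_space_slice {F : Type*} [NormedAddCommGroup F] [NormedSpace ℝ F]
    {f : ℝ → (Fin d → ℝ) → F} (hf : ContDiff ℝ n (uncurry f)) (t : ℝ) : ContDiff ℝ n (f t) :=
  hf.comp (contDiff_prodMk_right t)

lemma contDiff_time_slice (hf : ContDiff ℝ n (uncurry f)) (x : Fin d → ℝ) :
    ContDiff ℝ n fun t => f t x :=
  hf.comp (contDiff_prodMk_left x)

lemma contDiff_uncurry_grad (hf : ContDiff ℝ (n + 1) (uncurry f)) :
    ContDiff ℝ n (uncurry fun t => grad (f t)) := by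
  refine contDiff_pi.2 fun k => ContDiff.fderiv_apply (𝕜 := ℝ) (m := n + 1) (n := n)
    (f := fun (p : ℝ × (Fin d → ℝ)) y => f p.1 y) (k := fun _ => Pi.single k 1)
    ?_ contDiff_snd contDiff_const le_rfl
  exact hf.comp (contDiff_fst.fst.prodMk contDiff_snd)

lemma contDiff_uncurry_deriv (hf : ContDiff ℝ (n + 1) (uncurry f)) :
    ContDiff ℝ n (uncurry fun t x => deriv (fun τ => f τ x) t) := by
  refine ContDiff.fderiv_apply (𝕜 := ℝ) (m := n + 1) (n := n)
    (f := fun (p : ℝ × (Fin d → ℝ)) τ => f τ p.2) (k := fun _ => 1)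
    ?_ contDiff_fst contDiff_const le_rfl
  exact hf.comp (contDiff_snd.prodMk contDiff_fst.snd)

lemma continuous_uncurry_grad (hf : ContDiff ℝ 1 (uncurry f)) :
    Continuous (uncurry fun t => grad (f t)) :=
  (contDiff_uncurry_grad (n := 0) (by simpa using hf)).continuous

lemma continuous_uncurry_deriv (hf : ContDiff ℝ 1 (uncurry f)) :
    Continuous (uncurry fun t x => deriv (fun τ => f τ x) t) :=
  (contDiff_uncurry_deriv (n := 0) (by simpa using hf)).continuous

lemma contDiff_uncurry_flux {a : ℝ → (Fin d → ℝ) → Matrix (Fin d) (Fin d) ℝ}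
    (ha : ∀ k l, ContDiff ℝ n (uncurry fun t x => a t x k l))
    (hf : ContDiff ℝ (n + 1) (uncurry f)) (ξ : Fin d → ℝ) :
    ContDiff ℝ n (uncurry (flux a ξ f)) :=
  contDiff_pi.2 fun k => ContDiff.sum (s := Finset.univ) fun l _ =>
    (ha k l).mul (contDiff_const.add (contDiff_pi.1 (contDiff_uncurry_grad hf) l))

end Regularity

section SpaceTimeMean

variable {f g : ℝ → (Fin d → ℝ) → ℝ}

lemma integrableOn_cell (hf : Continuous (uncurry f)) :
    IntegrableOn (uncurry f) (Set.Icc (0 : ℝ) 1 ×ˢ box d) (volume.prod volume) :=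
  hf.continuousOn.integrableOn_compact (isCompact_Icc.prod isCompact_Icc)

lemma spaceTimeMean_eq_setIntegral (hf : Continuous (uncurry f)) :
    spaceTimeMean f = ∫ z in Set.Icc (0 : ℝ) 1 ×ˢ box d, uncurry f z ∂volume.prod volume :=
  (setIntegral_prod (uncurry f) (integrableOn_cell hf)).symm

lemma spaceTimeMean_const (c : ℝ) : spaceTimeMean (fun _ _ => c : ℝ → (Fin d → ℝ) → ℝ) = c := by
  simp [spaceTimeMean, box, Measure.real, Real.volume_Icc_pi]

lemma spaceTimeMean_const_mul (c : ℝ) :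
    spaceTimeMean (fun t x => c * f t x) = c * spaceTimeMean f := by
  simp only [spaceTimeMean, integral_const_mul]

lemma spaceTimeMean_add (hf : Continuous (uncurry f)) (hg : Continuous (uncurry g)) :
    spaceTimeMean (fun t x => f t x + g t x) = spaceTimeMean f + spaceTimeMean g := by
  rw [spaceTimeMean_eq_setIntegral hf, spaceTimeMean_eq_setIntegral hg,
    spaceTimeMean_eq_setIntegral (hf.add hg)]
  exact integral_add (integrableOn_cell hf) (integrableOn_cell hg)

lemma spaceTimeMean_sum {ι : Type*} (s : Finset ι) {f : ι → ℝ → (Fin d → ℝ) → ℝ}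
    (hf : ∀ i, Continuous (uncurry (f i))) :
    spaceTimeMean (fun t x => ∑ i ∈ s, f i t x) = ∑ i ∈ s, spaceTimeMean (f i) := by
  simp only [spaceTimeMean_eq_setIntegral (hf _)]
  rw [spaceTimeMean_eq_setIntegral (continuous_finsetSum s fun i _ => hf i)]
  exact integral_finsetSum s fun i _ => integrableOn_cell (hf i)

lemma spaceTimeMean_nonneg (hf : ∀ t x, 0 ≤ f t x) : 0 ≤ spaceTimeMean f :=
  integral_nonneg fun t => integral_nonneg (hf t)

lemma spaceTimeMean_deriv_eq_zero (hf : ContDiff ℝ 1 (uncurry f)) (hper : TimePeriodic f) :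
    spaceTimeMean (fun t x => deriv (fun τ => f τ x) t) = 0 := by
  have hint := integrableOn_cell (continuous_uncurry_deriv hf)
  rw [IntegrableOn, ← Measure.prod_restrict] at hint
  rw [spaceTimeMean, integral_integral_swap hint]
  refine integral_eq_zero_of_ae (Eventually.of_forall fun x => ?_)
  have hx : ContDiff ℝ 1 fun τ => f τ x := contDiff_time_slice hf x
  have hends : f 1 x = f 0 x := by simpa using hper 0 x
  calc ∫ t in Set.Icc (0 : ℝ) 1, deriv (fun τ => f τ x) t
      = ∫ t in (0 : ℝ)..1, deriv (fun τ => f τ x) t := by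
        rw [integral_Icc_eq_integral_Ioc, intervalIntegral.integral_of_le zero_le_one]
    _ = f 1 x - f 0 x := intervalIntegral.integral_deriv_eq_sub
        (fun t _ => hx.differentiable one_ne_zero t)
        ((hx.continuous_deriv le_rfl).intervalIntegrable _ _)
    _ = 0 := sub_eq_zero.2 hends

lemma gram_spaceTimeMean_nonneg {ι m : Type*} [Fintype ι] [Fintype m]
    {u : ι → ℝ → (Fin d → ℝ) → m → ℝ} (hu : ∀ i, Continuous (uncurry (u i))) (e : ι → ℝ) :
    0 ≤ ∑ i, ∑ j, e i * e j * spaceTimeMean fun t x => u i t x ⬝ᵥ u j t x := by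
  have hcont (i j) : Continuous (uncurry fun t x => e i * e j * (u i t x ⬝ᵥ u j t x)) :=
    continuous_const.mul ((hu i).dotProduct (hu j))
  calc 0 ≤ spaceTimeMean fun t x => (∑ i, e i • u i t x) ⬝ᵥ ∑ j, e j • u j t x :=
        spaceTimeMean_nonneg fun t x => Finset.sum_nonneg fun k _ => mul_self_nonneg _
    _ = spaceTimeMean fun t x => ∑ i, ∑ j, e i * e j * (u i t x ⬝ᵥ u j t x) := by
        simp only [sum_dotProduct, smul_dotProduct]
        simp only [dotProduct_sum, dotProduct_smul, smul_eq_mul, Finset.mul_sum, mul_assoc]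
    _ = ∑ i, ∑ j, e i * e j * spaceTimeMean fun t x => u i t x ⬝ᵥ u j t x := by
        rw [spaceTimeMean_sum _ fun i => continuous_finsetSum _ fun j _ => hcont i j]
        simp only [spaceTimeMean_sum _ (hcont _), spaceTimeMean_const_mul]

end SpaceTimeMean

section IntegrationByParts

variable {f : (Fin d → ℝ) → ℝ} {G : (Fin d → ℝ) → Fin d → ℝ}

lemma continuous_divergence (hG : ContDiff ℝ 1 G) : Continuous (divergence G) :=
  continuous_finsetSum _ fun k _ =>
    ((contDiff_pi.1 hG k).continuous_fderiv one_ne_zero).clm_apply continuous_const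

lemma continuous_grad (hf : ContDiff ℝ 1 f) : Continuous (grad f) :=
  continuous_pi fun _ => (hf.continuous_fderiv one_ne_zero).clm_apply continuous_const

lemma divergence_smul {x : Fin d → ℝ} (hf : DifferentiableAt ℝ f x) (hG : DifferentiableAt ℝ G x) :
    divergence (fun y => f y • G y) x = f x * divergence G x + grad f x ⬝ᵥ G x := by
  simp only [divergence, grad, dotProduct, Finset.mul_sum, ← Finset.sum_add_distrib]
  refine Finset.sum_congr rfl fun k _ => ?_
  simp only [pd, Pi.smul_apply, smul_eq_mul]
  rw [fderiv_fun_mul hf (differentiableAt_pi.1 hG k)]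
  simp [mul_comm]

lemma integral_box_divergence_eq_zero (hG : ContDiff ℝ 1 G)
    (hper : ∀ k, SpacePeriodic fun x => G x k) : ∫ x in box d, divergence G x = 0 := by
  cases d with
  | zero => simp [divergence]
  | succ n =>
    have hGk (k) : ContDiff ℝ 1 fun x => G x k := contDiff_pi.1 hG k
    have hfaces (k : Fin (n + 1)) (x : Fin n → ℝ) :
        G (k.insertNth 1 x) k = G (k.insertNth 0 x) k := by
      have hshift : k.insertNth (0 : ℝ) x + (fun i => ((Pi.single k 1 : Fin (n + 1) → ℤ) i : ℝ))
          = k.insertNth 1 x := by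
        ext l
        refine Fin.succAboveCases k ?_ (fun m => ?_) l <;> simp
      rw [← hshift]
      exact hper k _ _
    refine (integral_divergence_of_hasFDerivAt_off_countable' 0 1 zero_le_one
      (fun k x => G x k) (fun k x => fderiv ℝ (fun y => G y k) x) ∅ Set.countable_empty
      (fun k => (hGk k).continuous.continuousOn)
      (fun x _ k => ((hGk k).differentiable one_ne_zero x).hasFDerivAt)
      ((continuous_divergence hG).continuousOn.integrableOn_compact isCompact_Icc)).trans ?_
    exact Finset.sum_eq_zero fun k _ => by simp [hfaces]

lemma integral_box_grad_dotProduct (hf : ContDiff ℝ 1 f) (hfper : SpacePeriodic f)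
    (hG : ContDiff ℝ 1 G) (hGper : ∀ k, SpacePeriodic fun x => G x k) :
    ∫ x in box d, grad f x ⬝ᵥ G x = -∫ x in box d, f x * divergence G x := by
  have hzero : ∫ x in box d, divergence (fun y => f y • G y) x = 0 :=
    integral_box_divergence_eq_zero (hf.smul hG) fun k => hfper.mul (hGper k)
  simp only [divergence_smul (hf.differentiable one_ne_zero _)
    (hG.differentiable one_ne_zero _)] at hzero
  have hint {g : (Fin d → ℝ) → ℝ} (hg : Continuous g) : IntegrableOn g (box d) :=
    hg.continuousOn.integrableOn_compact isCompact_Icc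
  rw [integral_add (hint (g := fun x => f x * divergence G x)
      (hf.continuous.mul (continuous_divergence hG)))
    (hint ((continuous_grad hf).dotProduct hG.continuous))] at hzero
  linarith

lemma spaceTimeMean_grad_dotProduct {f : ℝ → (Fin d → ℝ) → ℝ}
    {G : ℝ → (Fin d → ℝ) → Fin d → ℝ} (hf : ∀ t, ContDiff ℝ 1 (f t))
    (hfper : ∀ t, SpacePeriodic (f t)) (hG : ∀ t, ContDiff ℝ 1 (G t))
    (hGper : ∀ t k, SpacePeriodic fun x => G t x k) :
    spaceTimeMean (fun t x => grad (f t) x ⬝ᵥ G t x)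
      = -spaceTimeMean fun t x => f t x * divergence (G t) x := by
  simp only [spaceTimeMean, ← integral_neg (μ := volume.restrict (Set.Icc (0 : ℝ) 1)),
    fun t => integral_box_grad_dotProduct (hf t) (hfper t) (hG t) (hGper t)]

lemma spaceTimeMean_dotProduct_grad_eq_zero {f : ℝ → (Fin d → ℝ) → ℝ}
    (hf : ∀ t, ContDiff ℝ 1 (f t)) (hper : ∀ t, SpacePeriodic (f t)) (v : Fin d → ℝ) :
    spaceTimeMean (fun t x => v ⬝ᵥ grad (f t) x) = 0 := by
  simp only [dotProduct_comm v]
  rw [spaceTimeMean_grad_dotProduct hf hper (fun _ => contDiff_const) fun _ _ _ _ => rfl]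
  simp [divergence, pd, spaceTimeMean]

lemma spaceTimeMean_add_grad_dotProduct_add_grad {f g : ℝ → (Fin d → ℝ) → ℝ}
    (hf : ContDiff ℝ 1 (uncurry f)) (hfper : ∀ t, SpacePeriodic (f t))
    (hg : ContDiff ℝ 1 (uncurry g)) (hgper : ∀ t, SpacePeriodic (g t)) (ξ η : Fin d → ℝ) :
    spaceTimeMean (fun t x => (ξ + grad (f t) x) ⬝ᵥ (η + grad (g t) x))
      = ξ ⬝ᵥ η + spaceTimeMean fun t x => grad (f t) x ⬝ᵥ grad (g t) x := by
  have hgf := continuous_uncurry_grad hf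
  have hgg := continuous_uncurry_grad hg
  have hξ : Continuous (uncurry fun (_ : ℝ) (_ : Fin d → ℝ) => ξ) := continuous_const
  have hη : Continuous (uncurry fun (_ : ℝ) (_ : Fin d → ℝ) => η) := continuous_const
  calc spaceTimeMean (fun t x => (ξ + grad (f t) x) ⬝ᵥ (η + grad (g t) x))
      = spaceTimeMean (fun t x => (ξ ⬝ᵥ η + η ⬝ᵥ grad (f t) x)
          + (ξ ⬝ᵥ grad (g t) x + grad (f t) x ⬝ᵥ grad (g t) x)) := by
        simp only [add_dotProduct, dotProduct_add, dotProduct_comm η]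
    _ = ξ ⬝ᵥ η + spaceTimeMean fun t x => grad (f t) x ⬝ᵥ grad (g t) x := by
        rw [spaceTimeMean_add ((hξ.dotProduct hη).add (hη.dotProduct hgf))
            ((hξ.dotProduct hgg).add (hgf.dotProduct hgg)),
          spaceTimeMean_add (hξ.dotProduct hη) (hη.dotProduct hgf),
          spaceTimeMean_add (hξ.dotProduct hgg) (hgf.dotProduct hgg), spaceTimeMean_const,
          spaceTimeMean_dotProduct_grad_eq_zero (contDiff_space_slice hf) hfper,
          spaceTimeMean_dotProduct_grad_eq_zero (contDiff_space_slice hg) hgper]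
        ring

end IntegrationByParts

section Corrector

variable {a : ℝ → (Fin d → ℝ) → Matrix (Fin d) (Fin d) ℝ} {ξ η : Fin d → ℝ}
  {χ ψ : ℝ → (Fin d → ℝ) → ℝ}

namespace IsCorrector

lemma contDiff_one (hχ : IsCorrector a ξ χ) : ContDiff ℝ 1 (uncurry χ) :=
  hχ.contDiff.of_le one_le_two

lemma contDiff_flux (hχ : IsCorrector a ξ χ)
    (ha : ∀ k l, ContDiff ℝ 1 (uncurry fun t x => a t x k l)) :
    ContDiff ℝ 1 (uncurry (flux a ξ χ)) :=
  contDiff_uncurry_flux ha (by simpa [one_add_one_eq_two] using hχ.contDiff) ξ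

lemma continuous_grad (hχ : IsCorrector a ξ χ) : Continuous (uncurry fun t => grad (χ t)) :=
  continuous_uncurry_grad hχ.contDiff_one

lemma continuous_deriv (hχ : IsCorrector a ξ χ) :
    Continuous (uncurry fun t x => deriv (fun τ => χ τ x) t) :=
  continuous_uncurry_deriv hχ.contDiff_one

lemma spaceTimeMean_grad_dotProduct_flux (hχ : IsCorrector a ξ χ)
    (ha : ∀ k l, ContDiff ℝ 1 (uncurry fun t x => a t x k l))
    (haper : ∀ k l t, SpacePeriodic fun x => a t x k l)
    (hψ : ∀ t, ContDiff ℝ 1 (ψ t)) (hψper : ∀ t, SpacePeriodic (ψ t)) :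
    spaceTimeMean (fun t x => grad (ψ t) x ⬝ᵥ flux a ξ χ t x)
      = -spaceTimeMean fun t x => ψ t x * deriv (fun τ => χ τ x) t := by
  simp only [hχ.deriv_eq]
  exact spaceTimeMean_grad_dotProduct hψ hψper (contDiff_space_slice (hχ.contDiff_flux ha))
    fun t => spacePeriodic_flux (fun k l => haper k l t) (hχ.spacePeriodic t)

lemma spaceTimeMean_mul_deriv_add_swap (hχ : IsCorrector a ξ χ) (hψ : IsCorrector a η ψ) :
    spaceTimeMean (fun t x => ψ t x * deriv (fun τ => χ τ x) t)
      + spaceTimeMean (fun t x => χ t x * deriv (fun τ => ψ τ x) t) = 0 := by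
  have hderiv (t x) : deriv (fun τ => ψ τ x * χ τ x) t
      = ψ t x * deriv (fun τ => χ τ x) t + χ t x * deriv (fun τ => ψ τ x) t := by
    rw [deriv_fun_mul
      ((contDiff_time_slice hψ.contDiff x).differentiable two_ne_zero t)
      ((contDiff_time_slice hχ.contDiff x).differentiable two_ne_zero t)]
    ring
  rw [← spaceTimeMean_add (hψ.contDiff.continuous.mul hχ.continuous_deriv)
    (hχ.contDiff.continuous.mul hψ.continuous_deriv)]
  simp only [← hderiv]
  exact spaceTimeMean_deriv_eq_zero (hψ.contDiff_one.mul hχ.contDiff_one)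
    (hψ.timePeriodic.mul hχ.timePeriodic)

lemma spaceTimeMean_dotProduct_flux_add_swap (hχ : IsCorrector a ξ χ) (hψ : IsCorrector a η ψ)
    (ha : ∀ k l, ContDiff ℝ 1 (uncurry fun t x => a t x k l))
    (haper : ∀ k l t, SpacePeriodic fun x => a t x k l) :
    spaceTimeMean (fun t x => η ⬝ᵥ flux a ξ χ t x) + spaceTimeMean (fun t x => ξ ⬝ᵥ flux a η ψ t x)
      = spaceTimeMean fun t x =>
          (η + grad (ψ t) x) ⬝ᵥ flux a ξ χ t x + (ξ + grad (χ t) x) ⬝ᵥ flux a η ψ t x := by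
  have hFχ := (hχ.contDiff_flux ha).continuous
  have hFψ := (hψ.contDiff_flux ha).continuous
  have hξ : Continuous (uncurry fun (_ : ℝ) (_ : Fin d → ℝ) => ξ) := continuous_const
  have hη : Continuous (uncurry fun (_ : ℝ) (_ : Fin d → ℝ) => η) := continuous_const
  have hχψ := hχ.spaceTimeMean_grad_dotProduct_flux ha haper
    (contDiff_space_slice hψ.contDiff_one) hψ.spacePeriodic
  have hψχ := hψ.spaceTimeMean_grad_dotProduct_flux ha haper
    (contDiff_space_slice hχ.contDiff_one) hχ.spacePeriodic
  rw [spaceTimeMean_add ((hη.add hψ.continuous_grad).dotProduct hFχ)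
    ((hξ.add hχ.continuous_grad).dotProduct hFψ)]
  simp only [add_dotProduct]
  rw [spaceTimeMean_add (hη.dotProduct hFχ) (hψ.continuous_grad.dotProduct hFχ),
    spaceTimeMean_add (hξ.dotProduct hFψ) (hχ.continuous_grad.dotProduct hFψ), hχψ, hψχ]
  linarith [hχ.spaceTimeMean_mul_deriv_add_swap hψ]

end IsCorrector

lemma dotProduct_mulVec_add_swap {n R : Type*} [Fintype n] [DecidableEq n] [CommRing R]
    {A : Matrix n n R} {c : R} (hA : A + Aᵀ = c • 1) (p q : n → R) :
    q ⬝ᵥ A *ᵥ p + p ⬝ᵥ A *ᵥ q = c * (p ⬝ᵥ q) := by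
  calc q ⬝ᵥ A *ᵥ p + p ⬝ᵥ A *ᵥ q = p ⬝ᵥ (A + Aᵀ) *ᵥ q := by
        rw [add_mulVec, dotProduct_add, dotProduct_mulVec q, ← mulVec_transpose,
          dotProduct_comm (Aᵀ *ᵥ q), add_comm]
    _ = c * (p ⬝ᵥ q) := by
        rw [hA, smul_mulVec, one_mulVec, dotProduct_smul, smul_eq_mul]

lemma IsCorrector.spaceTimeMean_dotProduct_flux_add_swap_of_add_transpose {c : ℝ}
    (hχ : IsCorrector a ξ χ) (hψ : IsCorrector a η ψ)
    (ha : ∀ k l, ContDiff ℝ 1 (uncurry fun t x => a t x k l))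
    (haper : ∀ k l t, SpacePeriodic fun x => a t x k l)
    (hsymm : ∀ t x, a t x + (a t x)ᵀ = c • 1) :
    spaceTimeMean (fun t x => η ⬝ᵥ flux a ξ χ t x) + spaceTimeMean (fun t x => ξ ⬝ᵥ flux a η ψ t x)
      = c * (ξ ⬝ᵥ η + spaceTimeMean fun t x => grad (χ t) x ⬝ᵥ grad (ψ t) x) := by
  rw [hχ.spaceTimeMean_dotProduct_flux_add_swap hψ ha haper]
  simp only [flux, dotProduct_mulVec_add_swap (hsymm _ _), spaceTimeMean_const_mul]
  rw [spaceTimeMean_add_grad_dotProduct_add_grad hχ.contDiff_one hχ.spacePeriodic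
    hψ.contDiff_one hψ.spacePeriodic]

end Corrector

lemma kr_dotProduct (i : Fin d) (v : Fin d → ℝ) : (kr · i) ⬝ᵥ v = v i := by
  simp [dotProduct, kr]

lemma sum_sum_mul_eq_of_symmPart {M g : Fin d → Fin d → ℝ} {κ : ℝ}
    (h : ∀ i j, (M i j + M j i) / 2 = κ * kr i j + κ * g i j) (e : Fin d → ℝ) :
    ∑ i, ∑ j, e i * M i j * e j = κ * ∑ i, e i ^ 2 + κ * ∑ i, ∑ j, e i * e j * g i j := by
  have hswap : ∑ i, ∑ j, e i * M i j * e j = ∑ i, ∑ j, e i * M j i * e j := by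
    rw [Finset.sum_comm]
    exact Finset.sum_congr rfl fun _ _ => Finset.sum_congr rfl fun _ _ => by ring
  calc ∑ i, ∑ j, e i * M i j * e j
      = (∑ i, ∑ j, e i * M i j * e j + ∑ i, ∑ j, e i * M j i * e j) / 2 := by
        rw [← hswap, add_self_div_two]
    _ = ∑ i, ∑ j, e i * ((M i j + M j i) / 2) * e j := by
        simp only [← Finset.sum_add_distrib, Finset.sum_div]
        exact Finset.sum_congr rfl fun _ _ => Finset.sum_congr rfl fun _ _ => by ring
    _ = ∑ i, ∑ j, (κ * (e i * (kr i j * e j)) + κ * (e i * e j * g i j)) := by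
        exact Finset.sum_congr rfl fun _ _ => Finset.sum_congr rfl fun _ _ => by rw [h]; ring
    _ = κ * ∑ i, e i ^ 2 + κ * ∑ i, ∑ j, e i * e j * g i j := by
        simp only [Finset.sum_add_distrib, ← Finset.mul_sum]
        simp [kr, sq]

theorem homogenized_matrix_symmetric_part_general
    (d : ℕ) (κ : ℝ)
    (s : ℝ → (Fin d → ℝ) → Fin d → Fin d → ℝ)
    (hs_smooth : ∀ i j, ContDiff ℝ 1 fun p : ℝ × (Fin d → ℝ) => s p.1 p.2 i j)
    (hs_per_x : ∀ i j t, SpacePeriodic fun x => s t x i j)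
    (hs_anti : ∀ t x i j, s t x i j = - s t x j i)
    (χ : Fin d → ℝ → (Fin d → ℝ) → ℝ)
    (hχ_smooth : ∀ i, ContDiff ℝ 2 fun p : ℝ × (Fin d → ℝ) => χ i p.1 p.2)
    (hχ_per_t : ∀ i, TimePeriodic (χ i))
    (hχ_per_x : ∀ i t, SpacePeriodic (χ i t))
    (hχ_cell : ∀ i t x,
      deriv (fun τ => χ i τ x) t
        = ∑ k, pd (fun y =>
            ∑ j, (κ * kr k j + s t y k j) * (kr j i + pd (χ i t) j y)) k x)
    (Abar : Fin d → Fin d → ℝ)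
    (hAbar : ∀ k i, Abar k i =
      ∫ t in Set.Icc (0:ℝ) 1, ∫ x in box d,
        ∑ j, (κ * kr k j + s t x k j) * (kr j i + pd (χ i t) j x)) :
    (∀ i j, (Abar i j + Abar j i) / 2
      = κ * kr i j
        + κ * ∫ t in Set.Icc (0:ℝ) 1, ∫ x in box d,
            ∑ k, pd (χ i t) k x * pd (χ j t) k x) ∧
    (0 ≤ κ → ∀ e : Fin d → ℝ, κ * ∑ i, (e i) ^ 2 ≤ ∑ i, ∑ j, e i * Abar i j * e j) := by
  let a (t : ℝ) (x : Fin d → ℝ) : Matrix (Fin d) (Fin d) ℝ := of fun k j => κ * kr k j + s t x k j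
  have ha (k l) : ContDiff ℝ 1 (uncurry fun t x => a t x k l) := contDiff_const.add (hs_smooth k l)
  have haper (k l t) : SpacePeriodic fun x => a t x k l :=
    fun x m => congrArg (κ * kr k l + ·) (hs_per_x k l t x m)
  have hsymm (t x) : a t x + (a t x)ᵀ = (2 * κ) • 1 := by
    ext k l
    simp only [a, Matrix.add_apply, transpose_apply, of_apply, hs_anti t x k l, Matrix.smul_apply,
      one_apply, kr, eq_comm (a := l), smul_eq_mul]
    ring
  have hχ (i) : IsCorrector a (kr · i) (χ i) :=
    ⟨hχ_smooth i, hχ_per_t i, hχ_per_x i, hχ_cell i⟩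
  have hAbar_mean (k i) :
      Abar k i = spaceTimeMean fun t x => (kr · k) ⬝ᵥ flux a (kr · i) (χ i) t x := by
    simp only [kr_dotProduct]
    exact hAbar k i
  have henergy (i j) : (Abar i j + Abar j i) / 2 = κ * kr i j
      + κ * spaceTimeMean fun t x => grad (χ i t) x ⬝ᵥ grad (χ j t) x := by
    rw [add_comm, hAbar_mean, hAbar_mean,
      (hχ i).spaceTimeMean_dotProduct_flux_add_swap_of_add_transpose (hχ j) ha haper hsymm,
      kr_dotProduct]
    ring
  refine ⟨henergy, fun hκ e => ?_⟩
  rw [sum_sum_mul_eq_of_symmPart henergy]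
  exact le_add_of_nonneg_right
    (mul_nonneg hκ (gram_spaceTimeMean_nonneg (fun i => (hχ i).continuous_grad) e))

/-- **Enhancement of diffusivity: the symmetric part of the homogenized
matrix.** Let `𝐚 = κI_d + s` with `s` a smooth space-time periodic antisymmetric
matrix field, let `χ_i` solve the parabolic cell problem
`∂_t χ_i = div(𝐚(e_i + ∇χ_i))` with zero space-time mean, and let
`𝐚̄ e_i := ⟨⟨𝐚(e_i + ∇χ_i)⟩⟩`. Then
`(1/2)(𝐚̄_{ij} + 𝐚̄_{ji}) = κδ_{ij} + κ⟨⟨∇χ_i·∇χ_j⟩⟩`, and in particular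
`e·𝐚̄e ≥ κ|e|²` for every `e ∈ ℝ^d`. -/
theorem homogenized_matrix_symmetric_part
    (d : ℕ) (κ : ℝ) (hκ : 0 < κ)
    (s : ℝ → (Fin d → ℝ) → Fin d → Fin d → ℝ)
    (hs_smooth : ∀ i j, ContDiff ℝ (⊤ : ℕ∞)
      fun p : ℝ × (Fin d → ℝ) => s p.1 p.2 i j)
    (hs_per_t : ∀ i j, TimePeriodic fun t x => s t x i j)
    (hs_per_x : ∀ i j t, SpacePeriodic fun x => s t x i j)
    (hs_anti : ∀ t x i j, s t x i j = - s t x j i)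
    (χ : Fin d → ℝ → (Fin d → ℝ) → ℝ)
    (hχ_smooth : ∀ i, ContDiff ℝ (⊤ : ℕ∞)
      fun p : ℝ × (Fin d → ℝ) => χ i p.1 p.2)
    (hχ_per_t : ∀ i, TimePeriodic (χ i))
    (hχ_per_x : ∀ i t, SpacePeriodic (χ i t))
    (hχ_mean : ∀ i, (∫ t in Set.Icc (0:ℝ) 1, ∫ x in box d, χ i t x) = 0)
    (hχ_cell : ∀ i t x,
      deriv (fun τ => χ i τ x) t
        = ∑ k, pd (fun y =>
            ∑ j, (κ * kr k j + s t y k j) * (kr j i + pd (χ i t) j y)) k x)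
    (Abar : Fin d → Fin d → ℝ)
    (hAbar : ∀ k i, Abar k i =
      ∫ t in Set.Icc (0:ℝ) 1, ∫ x in box d,
        ∑ j, (κ * kr k j + s t x k j) * (kr j i + pd (χ i t) j x)) :
    (∀ i j, (Abar i j + Abar j i) / 2
      = κ * kr i j
        + κ * ∫ t in Set.Icc (0:ℝ) 1, ∫ x in box d,
            ∑ k, pd (χ i t) k x * pd (χ j t) k x) ∧
    (∀ e : Fin d → ℝ, κ * ∑ i, (e i) ^ 2 ≤ ∑ i, ∑ j, e i * Abar i j * e j) := by
  have h := homogenized_matrix_symmetric_part_general d κ s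
    (fun i j => (hs_smooth i j).of_le (mod_cast le_top)) hs_per_x hs_anti χ
    (fun i => (hχ_smooth i).of_le (WithTop.coe_le_coe.2 le_top)) hχ_per_t hχ_per_x hχ_cell
    Abar hAbar
  exact ⟨h.1, h.2 hκ.le⟩
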